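/- arXiv:2401.07536 — 3 statements merged into one kernel-verified Lean document; each statement's English description precedes it below -/
import Mathlib

section
/- Let Y_+ additionally be pointed, let y_0 be a minimal point of (P(0)), let L_{y_0} be the Lagrange process of (P(0)) at y_0, and assume the Slater condition. Define L^-_{y_0}(z) := L_{y_0}(−z). Then Graph(L^-_{y_0}) equals the positive polar cone S_{Y_+}(y_0)^+ := {(z,y) ∈ Z×Y : z*(z)+y*(y) ≥ 0 for all (z*,y*) ∈ S_{Y_+}(y_0)}, and both sets equal cl(cone(Graph(V+Y_+) − (0, y_0))). -/
open Pointwise Filter Topology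

namespace Paper

section Defs

variable {E : Type*} [NormedAddCommGroup E] [NormedSpace ℝ E]

/-- The cone hull of a set: all nonnegative multiples of its elements. -/
def coneHull (A : Set E) : Set E := {x | ∃ r : ℝ, 0 ≤ r ∧ ∃ a ∈ A, x = r • a}

/-- A cone: a nonempty set closed under multiplication by nonnegative scalars. -/
def IsCone (K : Set E) : Prop := K.Nonempty ∧ ∀ r : ℝ, 0 ≤ r → ∀ x ∈ K, r • x ∈ K

/-- A pointed cone: `K ∩ (-K) = {0}`. -/
def IsPointed (K : Set E) : Prop := K ∩ (-K) = {0}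

/-- A proper cone: `{0} ≠ K ≠ E`. -/
def IsProper (K : Set E) : Prop := K ≠ {0} ∧ K ≠ Set.univ

/-- A solid cone: nonempty interior. -/
def IsSolid (K : Set E) : Prop := (interior K).Nonempty

/-- The contingent cone to `A` at `w`. -/
def contingentCone (A : Set E) (w : E) : Set E :=
  {v | Filter.liminf (fun h : ℝ => Metric.infDist (w + h • v) A / h) (𝓝[>] (0:ℝ)) = 0}

end Defs

section SV

variable {X Y Z : Type*}
  [NormedAddCommGroup X] [NormedSpace ℝ X]
  [NormedAddCommGroup Y] [NormedSpace ℝ Y]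
  [NormedAddCommGroup Z] [NormedSpace ℝ Z]

/-- The graph of a set-valued map. -/
def graph (Δ : Z → Set Y) : Set (Z × Y) := {p | p.2 ∈ Δ p.1}

/-- The image of a set by a set-valued map. -/
def imageSet (Δ : Z → Set Y) (A : Set Z) : Set Y := ⋃ w ∈ A, Δ w

/-- The feasible set map `S(z) = {x ∈ Ω : G(x) ∩ (z - Z₊) ≠ ∅}`. -/
def Smap (Ω : Set X) (G : X → Set Z) (Zp : Set Z) (z : Z) : Set X :=
  {x | x ∈ Ω ∧ (G x ∩ ({z} - Zp)).Nonempty}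

/-- The value map `V(z) = F(S(z))`. -/
def Vmap (Ω : Set X) (F : X → Set Y) (G : X → Set Z) (Zp : Set Z) (z : Z) : Set Y :=
  ⋃ x ∈ Smap Ω G Zp z, F x

/-- The map `(V + Y₊)(z) = V(z) + Y₊`. -/
def VplusMap (Ω : Set X) (F : X → Set Y) (G : X → Set Z) (Zp : Set Z) (Yp : Set Y)
    (z : Z) : Set Y :=
  Vmap Ω F G Zp z + Yp

/-- The graph of `V + Y₊`. -/
def GraphVplus (Ω : Set X) (F : X → Set Y) (G : X → Set Z) (Zp : Set Z) (Yp : Set Y) :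
    Set (Z × Y) :=
  {p : Z × Y | p.2 ∈ Vmap Ω F G Zp p.1 + Yp}

/-- Minimal points of a set `A` with respect to the cone `Yp`. -/
def MinSet (Yp : Set Y) (A : Set Y) : Set Y :=
  {a ∈ A | A ∩ ({a} - Yp) ⊆ {a} + Yp}

/-- The marginal map `M(z) = Min(V(z))`. -/
def Mmap (Ω : Set X) (F : X → Set Y) (G : X → Set Z) (Zp : Set Z) (Yp : Set Y)
    (z : Z) : Set Y :=
  MinSet Yp (Vmap Ω F G Zp z)

/-- `y₀` is a nondominated point of `(P(0))`. -/
def Nondominated (Ω : Set X) (F : X → Set Y) (G : X → Set Z) (Zp : Set Z) (Yp : Set Y)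
    (y0 : Y) : Prop :=
  y0 ∈ closure (Vmap Ω F G Zp 0) ∧
    Vmap Ω F G Zp 0 ∩ ({y0} - Yp) ⊆ {y0} + Yp

/-- `y₀` is a minimal point of `(P(0))`. -/
def MinimalPoint (Ω : Set X) (F : X → Set Y) (G : X → Set Z) (Zp : Set Z) (Yp : Set Y)
    (y0 : Y) : Prop :=
  y0 ∈ Vmap Ω F G Zp 0 ∧
    Vmap Ω F G Zp 0 ∩ ({y0} - Yp) ⊆ {y0} + Yp

/-- The set `S_{Y₊}(y₀)` of separating pairs of continuous linear functionals. -/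
def Sdual (Ω : Set X) (F : X → Set Y) (G : X → Set Z) (Zp : Set Z) (Yp : Set Y) (y0 : Y) :
    Set ((Z →L[ℝ] ℝ) × (Y →L[ℝ] ℝ)) :=
  {p | (∀ z' ∈ -Zp, ∀ y' ∈ ({y0} : Set Y) - Yp, p.1 z' + p.2 y' ≤ p.2 y0) ∧
       (∀ q ∈ GraphVplus Ω F G Zp Yp, p.2 y0 ≤ p.1 q.1 + p.2 q.2)}

/-- `P(Z,Y)`: closed convex processes with full domain. -/
def PZY : Set (Z → Set Y) :=
  {Δ | IsClosed (graph Δ) ∧ Convex ℝ (graph Δ) ∧ IsCone (graph Δ) ∧ ∀ z, (Δ z).Nonempty}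

/-- The set `Λ_{(z*,y*)}` of processes associated to `(z*,y*)`. -/
def Lambda (zs : Z →L[ℝ] ℝ) (ys : Y →L[ℝ] ℝ) : Set (Z → Set Y) :=
  {Δ | Δ ∈ PZY ∧ graph Δ \ {0} ⊆ {p : Z × Y | 0 < -(zs p.1) + ys p.2}}

/-- The set `Γ_{y₀}` of processes associated to `y₀`. -/
def Gamma (Ω : Set X) (F : X → Set Y) (G : X → Set Z) (Zp : Set Z) (Yp : Set Y) (y0 : Y) :
    Set (Z → Set Y) :=
  ⋃ p ∈ Sdual Ω F G Zp Yp y0 \ {0}, Lambda p.1 p.2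

/-- The Slater constraint qualification. -/
def Slater (Ω : Set X) (F : X → Set Y) (G : X → Set Z) (Zp : Set Z) : Prop :=
  ∃ x1 ∈ Ω, (F x1).Nonempty ∧ (G x1 ∩ (-interior Zp)).Nonempty

/-- `Ψ(Δ) = ∪_{x∈Ω}(F(x) + Δ(G(x)+Z₊))`. -/
def Umap (Ω : Set X) (F : X → Set Y) (G : X → Set Z) (Zp : Set Z) (Δ : Z → Set Y) : Set Y :=
  ⋃ x ∈ Ω, (F x + imageSet Δ (G x + Zp))

/-- The dual map `Φ(Δ)`: nondominated points of the closure of `Ψ(Δ)`. -/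
def Phi (Ω : Set X) (F : X → Set Y) (G : X → Set Z) (Zp : Set Z) (Yp : Set Y)
    (Δ : Z → Set Y) : Set Y :=
  {y ∈ closure (Umap Ω F G Zp Δ) | Umap Ω F G Zp Δ ∩ ({y} - Yp) ⊆ {y} + Yp}

/-- `Δ` is a Lagrange multiplier of `(P(0))` at `y₀`. -/
def LagrangeMultiplier (Ω : Set X) (F : X → Set Y) (G : X → Set Z) (Zp : Set Z) (Yp : Set Y)
    (Δ : Z → Set Y) (y0 : Y) : Prop :=
  y0 ∈ closure (Umap Ω F G Zp Δ) ∧ Umap Ω F G Zp Δ ∩ ({y0} - Yp) ⊆ {y0} + Yp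

/-- The graph of the Lagrange process of `(P(0))` at `y₀`. -/
def GraphLagrange (Ω : Set X) (F : X → Set Y) (G : X → Set Z) (Zp : Set Z) (Yp : Set Y)
    (y0 : Y) : Set (Z × Y) :=
  {p : Z × Y | ∀ q ∈ Sdual Ω F G Zp Yp y0, q.1 p.1 ≤ q.2 p.2}

/-- The Lagrange process of `(P(0))` at `y₀`, as a set-valued map. -/
def Lagrange (Ω : Set X) (F : X → Set Y) (G : X → Set Z) (Zp : Set Z) (Yp : Set Y) (y0 : Y)
    (z : Z) : Set Y :=
  {y | (z, y) ∈ GraphLagrange Ω F G Zp Yp y0}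

/-- The contingent derivative of a set-valued map `H` at `(z₀, y₀)`. -/
def contingentDeriv (H : Z → Set Y) (z0 : Z) (y0 : Y) (z : Z) : Set Y :=
  {y | (z, y) ∈ contingentCone (graph H) (z0, y0)}

/-- The S-derivative (Shi derivative) of a set-valued map `H` at `(z₀, y₀)`. -/
def Sderiv (H : Z → Set Y) (z0 : Z) (y0 : Y) (z : Z) : Set Y :=
  {y | ∃ (h : ℕ → ℝ) (zn : ℕ → Z) (yn : ℕ → Y),
    (∀ n, 0 < h n) ∧ Filter.Tendsto zn Filter.atTop (𝓝 z) ∧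
    Filter.Tendsto yn Filter.atTop (𝓝 y) ∧
    Filter.Tendsto (fun n => h n • zn n) Filter.atTop (𝓝 (0:Z)) ∧
    ∀ n, y0 + h n • yn n ∈ H (z0 + h n • zn n)}

/-- The standing assumptions of the paper: `Y₊`, `Z₊` proper solid convex cones, `Ω` nonempty
convex, `F` is `Y₊`-convex and `G` is `Z₊`-convex. -/
def StandingHyp (Ω : Set X) (F : X → Set Y) (G : X → Set Z) (Zp : Set Z) (Yp : Set Y) : Prop :=
  IsCone Yp ∧ IsProper Yp ∧ IsSolid Yp ∧ Convex ℝ Yp ∧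
  IsCone Zp ∧ IsProper Zp ∧ IsSolid Zp ∧ Convex ℝ Zp ∧
  Ω.Nonempty ∧ Convex ℝ Ω ∧
  Convex ℝ {p : X × Y | p.1 ∈ Ω ∧ p.2 ∈ F p.1 + Yp} ∧
  Convex ℝ {p : X × Z | p.1 ∈ Ω ∧ p.2 ∈ G p.1 + Zp}

end SV

variable {X Y Z : Type*}
  [NormedAddCommGroup X] [NormedSpace ℝ X]
  [NormedAddCommGroup Y] [NormedSpace ℝ Y]
  [NormedAddCommGroup Z] [NormedSpace ℝ Z]

/-! The pairs in `S_{Y₊}(y₀)` are exactly the continuous linear functionals on `Z × Y` that are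
nonnegative on `A = Graph(V + Y₊) - (0, y₀)`: since `y₀ ∈ V(0)`, the set `A` contains `Z₊ × Y₊`, and
this yields the inequality over `(-Z₊) × (y₀ - Y₊)`. Its positive polar is therefore the bipolar of
`A`, which is the closed conic hull of `A` by Hahn–Banach, and for convex `A` the conic hull is just
the set of nonnegative multiples of points of `A`. -/

lemma IsCone.add_subset_self {E : Type*} [NormedAddCommGroup E] [NormedSpace ℝ E] {K : Set E}
    (hK : IsCone K) (hconv : Convex ℝ K) : K + K ⊆ K := by
  have two_smul_eq : (2 : ℝ) • K = K + K := by
    simpa [one_add_one_eq_two] using hconv.add_smul zero_le_one zero_le_one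
  rw [← two_smul_eq]
  rintro _ ⟨x, hx, rfl⟩
  exact hK.2 2 zero_le_two x hx

lemma coneHull_eq_pointedConeHull {E : Type*} [NormedAddCommGroup E] [NormedSpace ℝ E]
    {A : Set E} (hA : Convex ℝ A) (hne : A.Nonempty) :
    coneHull A = (PointedCone.hull ℝ A : Set E) := by
  refine Set.Subset.antisymm ?_ fun x hx ↦ ?_
  · rintro _ ⟨r, hr, a, ha, rfl⟩
    exact PointedCone.smul_mem _ hr (PointedCone.subset_hull ha)
  induction hx using Submodule.span_induction with
  | mem a ha => exact ⟨1, zero_le_one, a, ha, (one_smul ℝ a).symm⟩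
  | zero =>
    obtain ⟨a, ha⟩ := hne
    exact ⟨0, le_rfl, a, ha, (zero_smul ℝ a).symm⟩
  | add x y _ _ hx hy =>
    obtain ⟨r, hr, a, ha, rfl⟩ := hx
    obtain ⟨s, hs, b, hb, rfl⟩ := hy
    have hsum : r • a + s • b ∈ (r + s) • A := by
      rw [hA.add_smul hr hs]
      exact Set.add_mem_add (Set.smul_mem_smul_set ha) (Set.smul_mem_smul_set hb)
    obtain ⟨c, hc, hc_eq⟩ := hsum
    exact ⟨r + s, add_nonneg hr hs, c, hc, hc_eq.symm⟩
  | smul t x _ hx =>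
    obtain ⟨r, hr, a, ha, rfl⟩ := hx
    exact ⟨t * r, mul_nonneg t.2 hr, a, ha, smul_smul (t : ℝ) r a⟩

lemma mem_closure_pointedConeHull_iff {E : Type*} [AddCommGroup E] [TopologicalSpace E]
    [IsTopologicalAddGroup E] [Module ℝ E] [ContinuousSMul ℝ E] [LocallyConvexSpace ℝ E]
    {A : Set E} {x : E} :
    x ∈ closure (PointedCone.hull ℝ A : Set E) ↔
      ∀ f : StrongDual ℝ E, (∀ a ∈ A, 0 ≤ f a) → 0 ≤ f x := by
  refine ⟨fun hx f hf ↦ ?_, fun h ↦ ?_⟩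
  · let halfSpace : ProperCone ℝ E := (ProperCone.positive ℝ ℝ).comap f
    have hull_le : PointedCone.hull ℝ A ≤ halfSpace := Submodule.span_le.2 hf
    exact closure_minimal hull_le halfSpace.isClosed hx
  · by_contra hx
    obtain ⟨f, hf, hfx⟩ := ProperCone.hyperplane_separation_point
      (Submodule.closure (PointedCone.hull ℝ A)) hx
    exact (h f fun a ha ↦ hf a (subset_closure (PointedCone.subset_hull ha))).not_gt hfx

lemma mem_closure_coneHull_iff {E : Type*} [NormedAddCommGroup E] [NormedSpace ℝ E]
    {A : Set E} (hA : Convex ℝ A) (hne : A.Nonempty) {x : E} :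
    x ∈ closure (coneHull A) ↔ ∀ f : StrongDual ℝ E, (∀ a ∈ A, 0 ≤ f a) → 0 ≤ f x := by
  rw [coneHull_eq_pointedConeHull hA hne, mem_closure_pointedConeHull_iff]

section ValueMap

variable {X Y Z : Type*} [NormedAddCommGroup Z] {Ω : Set X} {F : X → Set Y} {G : X → Set Z}
  {Zp : Set Z}

lemma mem_Smap_iff {z : Z} {x : X} : x ∈ Smap Ω G Zp z ↔ x ∈ Ω ∧ z ∈ G x + Zp := by
  refine and_congr_right fun _ ↦ ⟨?_, ?_⟩
  · rintro ⟨_, hg, _, rfl, k, hk, rfl⟩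
    exact ⟨_, hg, k, hk, sub_add_cancel _ _⟩
  · rintro ⟨g, hg, k, hk, rfl⟩
    exact ⟨g, hg, _, rfl, k, hk, add_sub_cancel_right g k⟩

lemma mem_Vmap_iff {z : Z} {y : Y} :
    y ∈ Vmap Ω F G Zp z ↔ ∃ x ∈ Ω, z ∈ G x + Zp ∧ y ∈ F x := by
  simp only [Vmap, Set.mem_iUnion, mem_Smap_iff, exists_prop, and_assoc]

lemma Vmap_subset_Vmap_add (hZp : Zp + Zp ⊆ Zp) (w : Z) {z : Z} (hz : z ∈ Zp) :
    Vmap Ω F G Zp w ⊆ Vmap Ω F G Zp (w + z) := by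
  intro y hy
  obtain ⟨x, hx, hwx, hyx⟩ := mem_Vmap_iff.1 hy
  have hwz : w + z ∈ G x + (Zp + Zp) := by
    rw [← add_assoc]
    exact Set.add_mem_add hwx hz
  exact mem_Vmap_iff.2 ⟨x, hx, Set.add_subset_add_left hZp hwz, hyx⟩

variable [NormedAddCommGroup Y] {Yp : Set Y}

lemma mem_GraphVplus_iff {p : Z × Y} :
    p ∈ GraphVplus Ω F G Zp Yp ↔ ∃ x ∈ Ω, p.1 ∈ G x + Zp ∧ p.2 ∈ F x + Yp := by
  simp only [GraphVplus, Set.mem_ofPred_eq, Set.mem_add (t := Yp), mem_Vmap_iff]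
  grind

lemma convex_GraphVplus [AddCommGroup X] [Module ℝ X] [NormedSpace ℝ Y] [NormedSpace ℝ Z]
    (hF : Convex ℝ {p : X × Y | p.1 ∈ Ω ∧ p.2 ∈ F p.1 + Yp})
    (hG : Convex ℝ {p : X × Z | p.1 ∈ Ω ∧ p.2 ∈ G p.1 + Zp}) :
    Convex ℝ (GraphVplus Ω F G Zp Yp) := by
  intro p hp q hq a b ha hb hab
  obtain ⟨x, hx, hpG, hpF⟩ := mem_GraphVplus_iff.1 hp
  obtain ⟨w, hw, hqG, hqF⟩ := mem_GraphVplus_iff.1 hq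
  have hepiF := @hF (x, p.2) ⟨hx, hpF⟩ (w, q.2) ⟨hw, hqF⟩ a b ha hb hab
  have hepiG := @hG (x, p.1) ⟨hx, hpG⟩ (w, q.1) ⟨hw, hqG⟩ a b ha hb hab
  exact mem_GraphVplus_iff.2 ⟨_, hepiF.1, hepiG.2, hepiF.2⟩

lemma prod_subset_GraphVplus_sub (hZp : Zp + Zp ⊆ Zp) {y0 : Y} (hy0 : y0 ∈ Vmap Ω F G Zp 0) :
    Zp ×ˢ Yp ⊆ GraphVplus Ω F G Zp Yp - {((0 : Z), y0)} := by
  rintro ⟨z, y⟩ ⟨hz, hy⟩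
  have hzV : y0 ∈ Vmap Ω F G Zp z := by
    simpa only [zero_add] using Vmap_subset_Vmap_add hZp 0 hz hy0
  exact ⟨(z, y0 + y), Set.add_mem_add hzV hy, _, rfl, by simp⟩

lemma GraphVplus_nonempty (hYp : Yp.Nonempty) {z : Z} (hV : (Vmap Ω F G Zp z).Nonempty) :
    (GraphVplus Ω F G Zp Yp).Nonempty :=
  let ⟨y, hy⟩ := hV.add hYp
  ⟨(z, y), hy⟩

end ValueMap

section Duality

variable {X Y Z : Type*} [NormedAddCommGroup Y] [NormedSpace ℝ Y] [NormedAddCommGroup Z]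
  [NormedSpace ℝ Z] {Ω : Set X} {F : X → Set Y} {G : X → Set Z} {Zp : Set Z} {Yp : Set Y} {y0 : Y}

lemma mem_Sdual_iff_coprod_nonneg (hZp : Zp + Zp ⊆ Zp) (hy0 : y0 ∈ Vmap Ω F G Zp 0)
    {q : (Z →L[ℝ] ℝ) × (Y →L[ℝ] ℝ)} :
    q ∈ Sdual Ω F G Zp Yp y0 ↔
      ∀ a ∈ GraphVplus Ω F G Zp Yp - {((0 : Z), y0)}, 0 ≤ q.1.coprod q.2 a := by
  constructor
  · rintro ⟨-, hq⟩ _ ⟨p, hp, _, rfl, rfl⟩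
    simpa [← add_sub_assoc] using hq p hp
  · refine fun hq ↦ ⟨?_, fun p hp ↦ ?_⟩
    · rintro z hz _ ⟨_, rfl, y, hy, rfl⟩
      have hzy := hq (-z, y) (prod_subset_GraphVplus_sub hZp hy0 ⟨hz, hy⟩)
      simp only [ContinuousLinearMap.coprod_apply, map_neg] at hzy
      rw [map_sub]
      linarith
    · simpa [← add_sub_assoc] using hq _ (Set.sub_mem_sub hp rfl)

lemma neg_fst_mem_GraphLagrange_iff {p : Z × Y} :
    (-p.1, p.2) ∈ GraphLagrange Ω F G Zp Yp y0 ↔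
      ∀ q ∈ Sdual Ω F G Zp Yp y0, 0 ≤ q.1 p.1 + q.2 p.2 := by
  simp only [GraphLagrange, Set.mem_ofPred_eq, map_neg, neg_le_iff_add_nonneg']

lemma polar_Sdual_eq_closure_coneHull (hYp : Yp.Nonempty) (hZp : Zp + Zp ⊆ Zp)
    (hV : Convex ℝ (GraphVplus Ω F G Zp Yp)) (hy0 : y0 ∈ Vmap Ω F G Zp 0) :
    {p : Z × Y | ∀ q ∈ Sdual Ω F G Zp Yp y0, 0 ≤ q.1 p.1 + q.2 p.2} =
      closure (coneHull (GraphVplus Ω F G Zp Yp - {((0 : Z), y0)})) := by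
  have hconv := hV.sub (convex_singleton ((0 : Z), y0))
  have hne := (GraphVplus_nonempty hYp ⟨y0, hy0⟩).sub (Set.singleton_nonempty ((0 : Z), y0))
  ext p
  simp only [mem_closure_coneHull_iff hconv hne, Set.mem_ofPred_eq,
    mem_Sdual_iff_coprod_nonneg hZp hy0, ← ContinuousLinearMap.coprod_apply]
  refine ⟨fun h f ↦ ?_, fun h q ↦ h (q.1.coprod q.2)⟩
  simpa only [ContinuousLinearMap.coprod_comp_inl_inr] using
    h (f.comp (.inl ℝ Z Y), f.comp (.inr ℝ Z Y))

theorem stmt_14_general (hYp : Yp.Nonempty) (hZp : Zp + Zp ⊆ Zp)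
    (hV : Convex ℝ (GraphVplus Ω F G Zp Yp)) (hy0 : y0 ∈ Vmap Ω F G Zp 0) :
    {p : Z × Y | (-p.1, p.2) ∈ GraphLagrange Ω F G Zp Yp y0} =
        {p : Z × Y | ∀ q ∈ Sdual Ω F G Zp Yp y0, 0 ≤ q.1 p.1 + q.2 p.2} ∧
      {p : Z × Y | (-p.1, p.2) ∈ GraphLagrange Ω F G Zp Yp y0} =
        closure (coneHull (GraphVplus Ω F G Zp Yp - {((0 : Z), y0)})) := by
  simp only [neg_fst_mem_GraphLagrange_iff, true_and]
  exact polar_Sdual_eq_closure_coneHull hYp hZp hV hy0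

end Duality

theorem stmt_14 (Ω : Set X) (F : X → Set Y) (G : X → Set Z) (Zp : Set Z) (Yp : Set Y)
    (hSt : StandingHyp Ω F G Zp Yp)
    (hYpPointed : IsPointed Yp)
    (y0 : Y) (hy0 : MinimalPoint Ω F G Zp Yp y0)
    (hSl : Slater Ω F G Zp) :
    {p : Z × Y | (-p.1, p.2) ∈ GraphLagrange Ω F G Zp Yp y0} =
        {p : Z × Y | ∀ q ∈ Sdual Ω F G Zp Yp y0, 0 ≤ q.1 p.1 + q.2 p.2} ∧
      {p : Z × Y | (-p.1, p.2) ∈ GraphLagrange Ω F G Zp Yp y0} =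
        closure (coneHull (GraphVplus Ω F G Zp Yp - {(((0:Z), y0) : Z × Y)})) := by
  obtain ⟨hYp, -, -, -, hZp, -, -, hZp_conv, -, -, hF, hG⟩ := hSt
  exact stmt_14_general hYp.1 (hZp.add_subset_self hZp_conv) (convex_GraphVplus hF hG) hy0.1

end Paper
end

section
/- Let Y_+ additionally be pointed, let y_0 be a minimal point of (P(0)) with y_0 ∈ F(x_0) for some feasible x_0 (x_0 ∈ Ω with G(x_0) ∩ (−Z_+) ≠ ∅), let L_{y_0} be the Lagrange process of (P(0)) at y_0, and assume that L_{y_0} is a Lagrange multiplier of (P(0)) at y_0. Then L_{y_0}(0) ∩ (−Y_+) = {0}. -/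
open Pointwise Filter Topology

namespace Paper

variable {X Y Z : Type*}
  [NormedAddCommGroup X] [NormedSpace ℝ X]
  [NormedAddCommGroup Y] [NormedSpace ℝ Y]
  [NormedAddCommGroup Z] [NormedSpace ℝ Z]

theorem inter_neg_subset_of_singleton_add_subset {E : Type*} [AddGroup E] {A D K : Set E} {a : E}
    (hD : {a} + D ⊆ A) (hA : A ∩ ({a} - K) ⊆ {a} + K) : D ∩ -K ⊆ K := by
  rintro d ⟨hdD, hdK⟩
  have mem_A : a + d ∈ A := hD (Set.add_mem_add rfl hdD)
  have mem_sub : a + d ∈ {a} - K := ⟨a, rfl, -d, hdK, sub_neg_eq_add a d⟩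
  obtain ⟨_, rfl, k, hkK, hk⟩ := hA ⟨mem_A, mem_sub⟩
  exact add_left_cancel hk ▸ hkK

section

variable {X Y Z : Type*} [NormedAddCommGroup Y] [NormedAddCommGroup Z]
  {Ω : Set X} {F : X → Set Y} {G : X → Set Z} {Zp : Set Z} {Yp : Set Y}

theorem IsPointed.zero_mem {K : Set Y} (hK : IsPointed K) : 0 ∈ K :=
  (hK.superset rfl).1

theorem IsPointed.inter_neg_eq_singleton_zero {D K : Set Y} (hK : IsPointed K) (hD : 0 ∈ D)
    (hDK : D ∩ -K ⊆ K) : D ∩ -K = {0} := by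
  apply Set.Subset.antisymm
  · exact fun y hy => hK.subset ⟨hDK hy, hy.2⟩
  · exact Set.singleton_subset_iff.mpr ⟨hD, by simpa using hK.zero_mem⟩

theorem mem_add_of_mem_Smap {x : X} {z : Z} (hx : x ∈ Smap Ω G Zp z) : z ∈ G x + Zp := by
  obtain ⟨w, hw, _, rfl, p, hp, rfl⟩ := hx.2
  exact ⟨_, hw, p, hp, sub_add_cancel _ p⟩

theorem Vmap_add_subset_Umap (Δ : Z → Set Y) (z : Z) :
    Vmap Ω F G Zp z + Δ z ⊆ Umap Ω F G Zp Δ := by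
  rintro _ ⟨y, hy, d, hd, rfl⟩
  obtain ⟨x, hx, hyF⟩ := Set.mem_iUnion₂.mp hy
  have hdΔ : d ∈ imageSet Δ (G x + Zp) := Set.mem_biUnion (mem_add_of_mem_Smap hx) hd
  exact Set.mem_biUnion hx.1 (Set.add_mem_add hyF hdΔ)

theorem zero_mem_Lagrange_zero [NormedSpace ℝ Y] [NormedSpace ℝ Z] (y0 : Y) :
    0 ∈ Lagrange Ω F G Zp Yp y0 0 :=
  fun q _ => by rw [map_zero, map_zero]

theorem LagrangeMultiplier.inter_neg_subset {Δ : Z → Set Y} {y0 : Y}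
    (hΔ : LagrangeMultiplier Ω F G Zp Yp Δ y0) (hy0 : y0 ∈ Vmap Ω F G Zp 0) :
    Δ 0 ∩ -Yp ⊆ Yp := by
  have translate_subset : {y0} + Δ 0 ⊆ Umap Ω F G Zp Δ :=
    (Set.add_subset_add_right (Set.singleton_subset_iff.mpr hy0)).trans (Vmap_add_subset_Umap Δ 0)
  exact inter_neg_subset_of_singleton_add_subset translate_subset hΔ.2

theorem stmt_16_general {Δ : Z → Set Y} {y0 : Y} (hYp : IsPointed Yp)
    (hy0 : y0 ∈ Vmap Ω F G Zp 0) (hΔ : LagrangeMultiplier Ω F G Zp Yp Δ y0) (hΔ0 : 0 ∈ Δ 0) :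
    Δ 0 ∩ -Yp = {0} :=
  hYp.inter_neg_eq_singleton_zero hΔ0 (hΔ.inter_neg_subset hy0)

end

theorem stmt_16 (Ω : Set X) (F : X → Set Y) (G : X → Set Z) (Zp : Set Z) (Yp : Set Y)
    (hSt : StandingHyp Ω F G Zp Yp)
    (hYpPointed : IsPointed Yp)
    (y0 : Y) (hy0 : MinimalPoint Ω F G Zp Yp y0)
    (x0 : X) (hx0Ω : x0 ∈ Ω) (hx0feas : (G x0 ∩ (-Zp)).Nonempty) (hy0F : y0 ∈ F x0)
    (hLM : LagrangeMultiplier Ω F G Zp Yp (Lagrange Ω F G Zp Yp y0) y0) :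
    Lagrange Ω F G Zp Yp y0 0 ∩ (-Yp) = {0} := by
  exact stmt_16_general hYpPointed hy0.1 hLM (zero_mem_Lagrange_zero y0)

end Paper
end

section
/- Let X be a real normed space, T a continuous linear functional on X, and x_0 ∈ X with T(x_0) > 0. Fix n ≥ 1, ε > 0, continuous linear functionals T_1, …, T_n on X, and set W := ∩_{i=1}^n {x ∈ X : T_i(x) ≤ ε}. Assume {x ∈ X : T(x) ≤ 0} ∩ (x_0+W) = ∅. Then cl(cone(x_0+W)) = (∩_{i=1}^n {x ∈ X : T_i(x) ≤ 0}) ∪ cone(x_0+W). As a consequence, cl(cone(x_0+W)) ∩ Ker(T) contains the closed subspace (∩_{i=1}^n Ker(T_i)) ∩ Ker(T) of finite codimension. -/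
open Pointwise Filter Topology

namespace Paper

/-!
Write a point of `cl (cone A)` as a limit of `r k • a k` with `r k ≥ 0` and `a k ∈ A`. When `A` is
closed and `0 ∉ A`, the norms `‖a k‖` are bounded away from `0`, so `r` is bounded and, along a
subsequence, converges to some `s`. If `s > 0` the limit lies in `cone A`; if `s = 0` it is an
asymptotic direction of `A`. The asymptotic directions of a nonempty polyhedron `{f i ≤ c i}` are
the points where every `f i` is nonpositive.
-/

section AsymptoticCone

variable {E : Type*} [AddCommGroup E] [Module ℝ E] [TopologicalSpace E]
  [IsTopologicalAddGroup E] [ContinuousSMul ℝ E]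

lemma mem_asymptoticCone_of_tendsto_smul [T1Space E] {α : Type*} {l : Filter α} [l.NeBot]
    {A : Set E} {x : E} {r : α → ℝ} {a : α → E} (hr : ∀ k, 0 ≤ r k) (ha : ∀ k, a k ∈ A)
    (hr₀ : Tendsto r l (𝓝 0)) (hx : Tendsto (fun k ↦ r k • a k) l (𝓝 x)) :
    x ∈ asymptoticCone ℝ A := by
  rcases eq_or_ne x 0 with rfl | hx₀
  · obtain ⟨k⟩ := l.nonempty_of_neBot
    exact zero_mem_asymptoticCone.2 ⟨a k, ha k⟩
  have hr_pos : ∀ᶠ k in l, 0 < r k := by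
    filter_upwards [hx.eventually_ne hx₀] with k hk
    exact (hr k).lt_of_ne' (left_ne_zero_of_smul hk)
  have hr_inv : Tendsto (fun k ↦ (r k)⁻¹) l atTop :=
    tendsto_inv_nhdsGT_zero.comp (tendsto_nhdsWithin_iff.2 ⟨hr₀, hr_pos⟩)
  refine (hr_inv.atTop_smul_nhds_tendsto_asymptoticNhds hx).frequently (Eventually.frequently ?_)
  filter_upwards [hr_pos] with k hk
  rw [inv_smul_smul₀ hk.ne']
  exact ha k

lemma asymptoticCone_setOf_le_subset (f : E →L[ℝ] ℝ) (c : ℝ) :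
    asymptoticCone ℝ {x | f x ≤ c} ⊆ {x | f x ≤ 0} := by
  intro v hv
  obtain ⟨p, hp⟩ := asymptoticCone_nonempty.1 ⟨v, hv⟩
  have hconvex : Convex ℝ {x | f x ≤ c} := convex_halfSpace_le f.toLinearMap.isLinear c
  have hclosed : IsClosed {x | f x ≤ c} := isClosed_le f.continuous continuous_const
  have hray (t : ℝ) (ht : 0 ≤ t) : t * f v + f p ≤ c := by
    simpa using hconvex.smul_vadd_mem_of_isClosed_of_mem_asymptoticCone hclosed ht hv hp
  refine le_of_not_gt (a := f v) fun hfv ↦ ?_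
  obtain ⟨t, ht, hlt⟩ := ((eventually_ge_atTop 0).and
    ((tendsto_id.atTop_mul_const hfv).eventually_gt_atTop (c - f p))).exists
  exact (hray t ht).not_gt (sub_lt_iff_lt_add.1 hlt)

lemma asymptoticCone_iInter_setOf_le {ι : Type*} (f : ι → E →L[ℝ] ℝ) (c : ι → ℝ)
    (hne : (⋂ i, {x | f i x ≤ c i}).Nonempty) :
    asymptoticCone ℝ (⋂ i, {x | f i x ≤ c i}) = ⋂ i, {x | f i x ≤ 0} := by
  refine (Set.subset_iInter fun i ↦ ?_).antisymm fun v hv ↦ ?_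
  · exact (asymptoticCone_mono (Set.iInter_subset _ i)).trans
      (asymptoticCone_setOf_le_subset (f i) (c i))
  obtain ⟨p, hp⟩ := hne
  have hray : Tendsto (fun t : ℝ ↦ t • v + p) atTop (AffineSpace.asymptoticNhds ℝ E v) :=
    (tendsto_id.atTop_smul_const_tendsto_asymptoticNhds v).asymptoticNhds_vadd_const p
  refine hray.frequently (Eventually.frequently ?_)
  filter_upwards [eventually_ge_atTop 0] with t ht
  refine Set.mem_iInter.2 fun i ↦ ?_
  have hpi : f i p ≤ c i := Set.mem_iInter.1 hp i
  have hvi : f i v ≤ 0 := Set.mem_iInter.1 hv i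
  calc
    f i (t • v + p) = t * f i v + f i p := by simp
    _ ≤ f i p := add_le_of_nonpos_left (mul_nonpos_of_nonneg_of_nonpos ht hvi)
    _ ≤ c i := hpi

end AsymptoticCone

lemma exists_pos_forall_le_norm_of_zero_notMem {E : Type*} [SeminormedAddCommGroup E] {A : Set E}
    (hA : IsClosed A) (h0 : (0 : E) ∉ A) : ∃ δ > 0, ∀ a ∈ A, δ ≤ ‖a‖ := by
  obtain ⟨δ, hδ, hball⟩ := Metric.isOpen_iff.1 hA.isOpen_compl 0 h0
  exact ⟨δ, hδ, fun a ha ↦ not_lt.1 fun hlt ↦ hball (mem_ball_zero_iff.2 hlt) ha⟩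

section ConeHull

variable {E : Type*} [NormedAddCommGroup E] [NormedSpace ℝ E] {A : Set E} {x : E}

lemma subset_coneHull : A ⊆ coneHull A :=
  fun a ha ↦ ⟨1, zero_le_one, a, ha, (one_smul ℝ a).symm⟩

lemma smul_mem_coneHull {c : ℝ} (hc : 0 ≤ c) (hx : x ∈ coneHull A) : c • x ∈ coneHull A := by
  obtain ⟨r, hr, a, ha, rfl⟩ := hx
  exact ⟨c * r, mul_nonneg hc hr, a, ha, smul_smul c r a⟩

lemma asymptoticCone_subset_closure_coneHull : asymptoticCone ℝ A ⊆ closure (coneHull A) :=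
  calc
    asymptoticCone ℝ A ⊆ asymptoticCone ℝ (coneHull A) := asymptoticCone_mono subset_coneHull
    _ = closure (coneHull A) :=
      asymptoticCone_eq_closure_of_forall_smul_mem fun _ hc _ ↦ smul_mem_coneHull hc.le

lemma mem_coneHull_of_tendsto_smul {α : Type*} {l : Filter α} [l.NeBot] {r : α → ℝ} {a : α → E}
    {s : ℝ} (hA : IsClosed A) (ha : ∀ k, a k ∈ A) (hs : 0 < s) (hr : Tendsto r l (𝓝 s))
    (hx : Tendsto (fun k ↦ r k • a k) l (𝓝 x)) : x ∈ coneHull A := by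
  have hlim : Tendsto a l (𝓝 (s⁻¹ • x)) := by
    refine ((hr.inv₀ hs.ne').smul hx).congr' ?_
    filter_upwards [hr.eventually_ne hs.ne'] with k hk
    exact inv_smul_smul₀ hk (a k)
  exact ⟨s, hs.le, s⁻¹ • x, hA.mem_of_tendsto hlim (.of_forall ha), (smul_inv_smul₀ hs.ne' x).symm⟩

lemma closure_coneHull_subset (hA : IsClosed A) (h0 : (0 : E) ∉ A) :
    closure (coneHull A) ⊆ asymptoticCone ℝ A ∪ coneHull A := by
  intro x hx
  obtain ⟨u, hu, hux⟩ := mem_closure_iff_seq_limit.1 hx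
  choose r hr a ha hua using hu
  obtain rfl : u = fun k ↦ r k • a k := funext hua
  obtain ⟨δ, hδ, hδA⟩ := exists_pos_forall_le_norm_of_zero_notMem hA h0
  obtain ⟨M, hM⟩ := hux.norm.bddAbove_range
  have hr_mem (k : ℕ) : r k ∈ Set.Icc 0 (M / δ) := by
    refine ⟨hr k, (le_div_iff₀ hδ).2 ?_⟩
    calc
      r k * δ ≤ r k * ‖a k‖ := mul_le_mul_of_nonneg_left (hδA _ (ha k)) (hr k)
      _ = ‖r k • a k‖ := (norm_smul_of_nonneg (hr k) (a k)).symm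
      _ ≤ M := hM (Set.mem_range_self k)
  obtain ⟨s, hs, φ, hφ, hrφ⟩ := isCompact_Icc.tendsto_subseq hr_mem
  have hxφ := hux.comp hφ.tendsto_atTop
  rcases hs.1.eq_or_lt with rfl | hs_pos
  · exact .inl (mem_asymptoticCone_of_tendsto_smul (fun k ↦ hr (φ k)) (fun k ↦ ha (φ k)) hrφ hxφ)
  · exact .inr (mem_coneHull_of_tendsto_smul hA (fun k ↦ ha (φ k)) hs_pos hrφ hxφ)

theorem closure_coneHull_eq (hA : IsClosed A) (h0 : (0 : E) ∉ A) :
    closure (coneHull A) = asymptoticCone ℝ A ∪ coneHull A :=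
  (closure_coneHull_subset hA h0).antisymm
    (Set.union_subset asymptoticCone_subset_closure_coneHull subset_closure)

end ConeHull

lemma singleton_add_iInter_setOf_le {ι G R F : Type*} [AddCommGroup G] [AddCommGroup R]
    [PartialOrder R] [IsOrderedAddMonoid R] [FunLike F G R] [AddMonoidHomClass F G R]
    (f : ι → F) (c : ι → R) (x₀ : G) :
    {x₀} + ⋂ i, {x | f i x ≤ c i} = ⋂ i, {x | f i x ≤ f i x₀ + c i} := by
  ext x
  simp [Set.singleton_add]

theorem closure_coneHull_singleton_add_iInter_setOf_le {E ι : Type*} [NormedAddCommGroup E]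
    [NormedSpace ℝ E] (x₀ : E) (f : ι → E →L[ℝ] ℝ) (c : ι → ℝ)
    (hne : (⋂ i, {x | f i x ≤ c i}).Nonempty) (h0 : (0 : E) ∉ {x₀} + ⋂ i, {x | f i x ≤ c i}) :
    closure (coneHull ({x₀} + ⋂ i, {x | f i x ≤ c i})) =
      (⋂ i, {x | f i x ≤ 0}) ∪ coneHull ({x₀} + ⋂ i, {x | f i x ≤ c i}) := by
  have hne' := (Set.singleton_nonempty x₀).add hne
  rw [singleton_add_iInter_setOf_le] at hne' h0 ⊢
  have hclosed : IsClosed (⋂ i, {x | f i x ≤ f i x₀ + c i}) :=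
    isClosed_iInter fun i ↦ isClosed_le (f i).continuous continuous_const
  rw [closure_coneHull_eq hclosed h0, asymptoticCone_iInter_setOf_le _ _ hne']

lemma cofg_iInf_ker {K V W ι : Type*} [Ring K] [AddCommGroup V] [Module K V] [AddCommGroup W]
    [Module K W] [IsNoetherian K W] [Finite ι] (f : ι → V →ₗ[K] W) :
    (⨅ i, LinearMap.ker (f i)).CoFG := by
  rw [← LinearMap.ker_pi]
  exact .ker _

theorem stmt_19_general {X ι : Type*} [NormedAddCommGroup X] [NormedSpace ℝ X] [Finite ι]
    (T : X →L[ℝ] ℝ) (x0 : X) (ε : ι → ℝ) (Ti : ι → (X →L[ℝ] ℝ))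
    (hne : (⋂ i, {x : X | Ti i x ≤ ε i}).Nonempty)
    (h0 : (0 : X) ∉ ({x0} : Set X) + ⋂ i, {x : X | Ti i x ≤ ε i}) :
    closure (coneHull (({x0} : Set X) + ⋂ i, {x : X | Ti i x ≤ ε i})) =
        (⋂ i, {x : X | Ti i x ≤ 0}) ∪
          coneHull (({x0} : Set X) + ⋂ i, {x : X | Ti i x ≤ ε i}) ∧
      (((⨅ i, LinearMap.ker (Ti i : X →ₗ[ℝ] ℝ)) ⊓ LinearMap.ker (T : X →ₗ[ℝ] ℝ) :
          Submodule ℝ X) : Set X) ⊆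
        closure (coneHull (({x0} : Set X) + ⋂ i, {x : X | Ti i x ≤ ε i})) ∩ {x : X | T x = 0} ∧
      FiniteDimensional ℝ
        (X ⧸ ((⨅ i, LinearMap.ker (Ti i : X →ₗ[ℝ] ℝ)) ⊓ LinearMap.ker (T : X →ₗ[ℝ] ℝ) :
          Submodule ℝ X)) := by
  have hclosure := closure_coneHull_singleton_add_iInter_setOf_le x0 Ti ε hne h0
  refine ⟨hclosure, fun x hx ↦ ⟨?_, hx.2⟩, (cofg_iInf_ker _).inf (.ker _)⟩
  have hker : ∀ i, Ti i x = 0 := (Submodule.mem_iInf _).1 hx.1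
  rw [hclosure]
  exact .inl (Set.mem_iInter.2 fun i ↦ (hker i).le)

theorem stmt_19 {X : Type*} [NormedAddCommGroup X] [NormedSpace ℝ X]
    (T : X →L[ℝ] ℝ) (x0 : X) (hT : 0 < T x0)
    (n : ℕ) (hn : 1 ≤ n) (ε : ℝ) (hε : 0 < ε)
    (Ti : Fin n → (X →L[ℝ] ℝ))
    (hdisj : {x : X | T x ≤ 0} ∩
      (({x0} : Set X) + ⋂ i, {x : X | Ti i x ≤ ε}) = ∅) :
    closure (coneHull (({x0} : Set X) + ⋂ i, {x : X | Ti i x ≤ ε})) =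
        (⋂ i, {x : X | Ti i x ≤ 0}) ∪
          coneHull (({x0} : Set X) + ⋂ i, {x : X | Ti i x ≤ ε}) ∧
      (((⨅ i, LinearMap.ker (Ti i : X →ₗ[ℝ] ℝ)) ⊓ LinearMap.ker (T : X →ₗ[ℝ] ℝ) : Submodule ℝ X) : Set X) ⊆
        closure (coneHull (({x0} : Set X) + ⋂ i, {x : X | Ti i x ≤ ε})) ∩
          {x : X | T x = 0} ∧
      FiniteDimensional ℝ
        (X ⧸ ((⨅ i, LinearMap.ker (Ti i : X →ₗ[ℝ] ℝ)) ⊓ LinearMap.ker (T : X →ₗ[ℝ] ℝ) : Submodule ℝ X)) := by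
  refine stmt_19_general T x0 (fun _ ↦ ε) Ti ⟨0, by simp [hε.le]⟩ fun h0 ↦ ?_
  exact hdisj.subset ⟨T.map_zero.le, h0⟩

end Paper
end
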